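/- Let d ≥ 2, let Ω ⊂ ℝ^d be a nonempty bounded open set, and let F, a₀, a₁ ∈ ℝ^{d×d} with a₀ ≠ a₁ and a := a₁ − a₀. Then the infimum, taken over all v ∈ C_c^∞(Ω; ℝ^d), of ∫_Ω dist²(F + Dv(x), {a₀, a₁}) dx equals |Ω| · min_{θ ∈ [0,1]} ( ‖F − a_θ‖² + θ(1−θ)·( ‖a‖² − max_{ξ ∈ S^{d−1}} ‖aξ‖² ) ), where Dv(x) denotes the Jacobian matrix of v at x and |Ω| the Lebesgue measure of Ω. (Both the maximum over the unit sphere S^{d−1} and the minimum over θ ∈ [0,1] are attained.) -/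

import Mathlib

/-!
Lower bound. With `a = a₁ - a₀`, the form `tr (P ^ 2) - (tr P) ^ 2` in `P = Dv aᵀ` is a null
Lagrangian: it integrates to zero over test fields. Since `⟪a, Dv⟫ = tr P` and
`tr (P ^ 2) ≤ ‖Dv aᵀ‖ ^ 2 ≤ G ‖Dv‖ ^ 2`, where `G` is the maximum of `‖a ξ‖ ^ 2` over the sphere,
adding `G⁻¹` times this form lets one complete the square in `⟪a, Dv⟫`. Writing the energy density
as `‖F + Dv - a_χ‖ ^ 2` with the indicator `χ` of the set where `a₁` is the closer well, the
average `θ` of `χ` is the only quantity left, and it plays the role of the volume fraction.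

Upper bound. For a maximising `ξ`, fields `φ(x) N⁻¹ s(N ξ ⬝ x + t) b` with `b = a ξ` and periodic
`s` have gradient close to `φ s' b ⊗ ξ`. No explicit phase `t` need be chosen: averaging over a
period of `t` turns the energy into an integral of the energy over one period of `s'`. Letting
`N → ∞`, then `φ → 1`, then `s'` tend to the profile taking the values `1 - θ` and `-θ`, gives the
energy of a simple laminate.
-/

open MeasureTheory

/-- Squared Frobenius norm of a matrix. -/
def frob2 {d : ℕ} (M : Matrix (Fin d) (Fin d) ℝ) : ℝ := ∑ i, ∑ j, (M i j) ^ 2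

/-- The Jacobian matrix of `v` at `x`, entry `(i,j)` is `∂ vᵢ / ∂ xⱼ`. -/
noncomputable def jacobian {d : ℕ} (v : (Fin d → ℝ) → (Fin d → ℝ)) (x : Fin d → ℝ) :
    Matrix (Fin d) (Fin d) ℝ :=
  Matrix.of fun i j => fderiv ℝ v x (Pi.single j 1) i

open Filter Set TopologicalSpace
open scoped Topology ContDiff Manifold Distributions Matrix Matrix.Norms.Frobenius InnerProductSpace

theorem tendsto_integral_comp_of_isCompact {α X : Type*} [MeasurableSpace α] {μ : Measure α}
    [IsFiniteMeasure μ] [TopologicalSpace X] {S : Set X} (hS : IsCompact S) {g : X → ℝ}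
    (hg : Continuous g) {u : ℕ → α → X} {u' : α → X}
    (hmeas : ∀ k, AEStronglyMeasurable (fun y ↦ g (u k y)) μ) (hmem : ∀ k y, u k y ∈ S)
    (hlim : ∀ᵐ y ∂μ, Tendsto (u · y) atTop (𝓝 (u' y))) :
    Tendsto (fun k ↦ ∫ y, g (u k y) ∂μ) atTop (𝓝 (∫ y, g (u' y) ∂μ)) := by
  obtain ⟨C, hC⟩ := hS.exists_bound_of_continuousOn hg.continuousOn
  exact tendsto_integral_of_dominated_convergence (fun _ ↦ C) hmeas (integrable_const C)
    (fun k ↦ .of_forall fun y ↦ hC _ (hmem k y))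
    (hlim.mono fun y hy ↦ (hg.tendsto _).comp hy)

theorem integral_comp_indicator_one {α : Type*} [MeasurableSpace α] {μ : Measure α}
    [IsFiniteMeasure μ] {A : Set α} (hA : MeasurableSet A) (f : ℝ → ℝ) :
    ∫ x, f (A.indicator 1 x) ∂μ = μ.real A * f 1 + μ.real Aᶜ * f 0 := by
  have hsplit (x : α) : f (A.indicator 1 x) =
      A.indicator (fun _ ↦ f 1) x + Aᶜ.indicator (fun _ ↦ f 0) x := by
    by_cases hx : x ∈ A <;> simp [hx]
  simp_rw [hsplit]
  rw [integral_add ((integrable_const _).indicator hA) ((integrable_const _).indicator hA.compl),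
    integral_indicator_const _ hA, integral_indicator_const _ hA.compl, smul_eq_mul, smul_eq_mul]

theorem average_indicator_one_mem_Icc {α : Type*} [MeasurableSpace α] {μ : Measure α}
    [IsFiniteMeasure μ] {A : Set α} (hA : MeasurableSet A) :
    ⨍ x, A.indicator (1 : α → ℝ) x ∂μ ∈ Icc 0 1 := by
  rw [average_eq, integral_indicator_one hA, smul_eq_mul]
  exact ⟨by positivity, inv_mul_le_one_of_le₀ (measureReal_mono (subset_univ A)) measureReal_nonneg⟩

theorem intervalIntegral_integral_phase_eq {X : Type*} [TopologicalSpace X] [MeasurableSpace X]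
    [OpensMeasurableSpace X] [SecondCountableTopology X] {μ : Measure X} [IsFiniteMeasure μ]
    {h : X → ℝ → ℝ} (hh : Continuous (Function.uncurry h)) {C : ℝ} (hC : ∀ x t, ‖h x t‖ ≤ C)
    {T : ℝ} (hT : ∀ x, Function.Periodic (h x) T) {c : X → ℝ} (hc : Continuous c) (a : ℝ) :
    ∫ t in a..a + T, ∫ x, h x (c x + t) ∂μ = ∫ x, (∫ t in a..a + T, h x t) ∂μ := by
  have hcont : Continuous (Function.uncurry fun t x ↦ h x (c x + t)) :=
    hh.comp (f := fun z : ℝ × X ↦ (z.2, c z.2 + z.1)) (by fun_prop)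
  have : IsFiniteMeasure (volume.restrict (uIoc a (a + T))) := ⟨by simp [uIoc]⟩
  have hint : Integrable (Function.uncurry fun t x ↦ h x (c x + t))
      ((volume.restrict (uIoc a (a + T))).prod μ) :=
    .of_bound hcont.aestronglyMeasurable C (.of_forall fun _ ↦ hC _ _)
  rw [intervalIntegral_integral_swap hint]
  congr with x
  rw [intervalIntegral.integral_comp_add_left, ← add_assoc]
  exact (hT x).intervalIntegral_add_eq _ _

theorem mul_le_integral_intervalIntegral_of_forall_phase_le {X : Type*} [TopologicalSpace X]
    [MeasurableSpace X] [OpensMeasurableSpace X] [SecondCountableTopology X] {μ : Measure X}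
    [IsFiniteMeasure μ] {h : X → ℝ → ℝ} (hh : Continuous (Function.uncurry h)) {C : ℝ}
    (hC : ∀ x t, ‖h x t‖ ≤ C) {T : ℝ} (hT : ∀ x, Function.Periodic (h x) T) (hT_pos : 0 ≤ T)
    {c : X → ℝ} (hc : Continuous c) {e : ℝ} (he : ∀ t, e ≤ ∫ x, h x (c x + t) ∂μ) (a : ℝ) :
    T * e ≤ ∫ x, (∫ t in a..a + T, h x t) ∂μ := by
  have hphase_cont : Continuous fun t ↦ ∫ x, h x (c x + t) ∂μ :=
    continuous_of_dominated (bound := fun _ ↦ C)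
      (fun t ↦ (hh.comp (f := fun x ↦ (x, c x + t)) (by fun_prop)).aestronglyMeasurable)
      (fun t ↦ .of_forall fun x ↦ hC _ _) (integrable_const C)
      (.of_forall fun x ↦ hh.comp (f := fun t ↦ (x, c x + t)) (by fun_prop))
  calc T * e = ∫ _ in a..a + T, e := by simp
    _ ≤ ∫ t in a..a + T, ∫ x, h x (c x + t) ∂μ :=
        intervalIntegral.integral_mono (by linarith) (by simp)
          (hphase_cont.intervalIntegrable _ _) he
    _ = ∫ x, (∫ t in a..a + T, h x t) ∂μ := intervalIntegral_integral_phase_eq hh hC hT hc a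

theorem integral_const_add_sub_average_mul_add {α : Type*} [MeasurableSpace α] {μ : Measure α}
    [IsFiniteMeasure μ] {χ h : α → ℝ} (hχ : Integrable χ μ) (hh : Integrable h μ)
    (hh_zero : ∫ x, h x ∂μ = 0) (r K : ℝ) :
    ∫ x, (r + (χ x - ⨍ y, χ y ∂μ) * K + h x) ∂μ = μ.real univ * r := by
  have hχ_sub : Integrable (fun x ↦ (χ x - ⨍ y, χ y ∂μ) * K) μ :=
    (hχ.sub (integrable_const _)).mul_const K
  have hr : Integrable (fun x ↦ r + (χ x - ⨍ y, χ y ∂μ) * K) μ := (integrable_const r).add hχ_sub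
  rw [integral_add hr hh, integral_add (integrable_const r) hχ_sub,
    integral_mul_const, integral_sub_average, hh_zero]
  simp

theorem exists_periodic_primitive {p : ℝ → ℝ} (hp : ContDiff ℝ ∞ p) {T : ℝ}
    (hper : Function.Periodic p T) {a : ℝ} (hmean : ∫ t in a..a + T, p t = 0) :
    ∃ s : ℝ → ℝ, ContDiff ℝ ∞ s ∧ (∀ x, HasDerivAt s (p x) x) ∧ Function.Periodic s T := by
  have hint (x y : ℝ) : IntervalIntegrable p volume x y := hp.continuous.intervalIntegrable x y
  have hderiv (x : ℝ) : HasDerivAt (fun x ↦ ∫ t in 0..x, p t) (p x) x :=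
    hp.continuous.integral_hasStrictDerivAt 0 x |>.hasDerivAt
  have hsmooth : ContDiff ℝ ∞ fun x ↦ ∫ t in 0..x, p t :=
    contDiff_infty_iff_deriv.2 ⟨fun x ↦ (hderiv x).differentiableAt,
      by rwa [funext fun x ↦ (hderiv x).deriv]⟩
  refine ⟨fun x ↦ ∫ t in 0..x, p t, hsmooth, hderiv, fun x ↦ ?_⟩
  beta_reduce
  rw [← intervalIntegral.integral_add_adjacent_intervals (hint 0 x) (hint x (x + T)),
    hper.intervalIntegral_add_eq x a, hmean, add_zero]

theorem tendsto_smoothTransition_natCast_mul (r : ℝ) :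
    Tendsto (fun k : ℕ ↦ Real.smoothTransition (k * r)) atTop (𝓝 ((Ioi 0).indicator 1 r)) := by
  refine tendsto_const_nhds.congr' ?_
  rcases le_or_gt r 0 with hr | hr
  · filter_upwards with k
    rw [indicator_of_notMem (by simpa using hr), Real.smoothTransition.zero_of_nonpos]
    exact mul_nonpos_of_nonneg_of_nonpos k.cast_nonneg hr
  · have hkr : Tendsto (fun k : ℕ ↦ k * r) atTop atTop :=
      tendsto_natCast_atTop_atTop.atTop_mul_const hr
    filter_upwards [hkr.eventually_ge_atTop 1] with k hk
    rw [indicator_of_mem (by simpa using hr), Real.smoothTransition.one_of_one_le hk, Pi.one_apply]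

theorem setOf_cos_lt_cos_inter_Ioc {α : ℝ} (hα : α ∈ Icc 0 Real.pi) :
    {t | Real.cos α < Real.cos t} ∩ Ioc (-Real.pi) Real.pi = Ioo (-α) α := by
  have hiff {t : ℝ} (ht : |t| ≤ Real.pi) : Real.cos α < Real.cos t ↔ |t| < α := by
    rw [← Real.cos_abs t]
    exact Real.strictAntiOn_cos.lt_iff_gt hα ⟨abs_nonneg t, ht⟩
  ext t
  rw [mem_inter_iff, mem_Ioc, mem_Ioo, ← abs_lt]
  exact ⟨fun ⟨hcos, ht⟩ ↦ (hiff (abs_le.2 ⟨ht.1.le, ht.2⟩)).1 hcos, fun ht ↦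
    ⟨(hiff (ht.le.trans hα.2)).2 ht, (abs_lt.1 (ht.trans_le hα.2)).imp_right le_of_lt⟩⟩

theorem exists_seq_periodic_tendsto_indicator {θ : ℝ} (hθ : θ ∈ Icc 0 1) :
    ∃ A : Set ℝ, MeasurableSet A ∧
      (volume.restrict (Ioc (-Real.pi) Real.pi)).real A = 2 * Real.pi * θ ∧
      ∃ q : ℕ → ℝ → ℝ, (∀ k, ContDiff ℝ ∞ (q k)) ∧ (∀ k, Function.Periodic (q k) (2 * Real.pi)) ∧
        (∀ k t, q k t ∈ Icc 0 1) ∧ ∀ t, Tendsto (q · t) atTop (𝓝 (A.indicator 1 t)) := by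
  have hα : Real.pi * θ ∈ Icc 0 Real.pi :=
    ⟨mul_nonneg Real.pi_nonneg hθ.1, mul_le_of_le_one_right Real.pi_nonneg hθ.2⟩
  have hA : MeasurableSet {t | Real.cos (Real.pi * θ) < Real.cos t} :=
    (isOpen_lt continuous_const Real.continuous_cos).measurableSet
  refine ⟨{t | Real.cos (Real.pi * θ) < Real.cos t}, hA, ?_,
    fun k t ↦ Real.smoothTransition (k * (Real.cos t - Real.cos (Real.pi * θ))),
    fun k ↦ Real.smoothTransition.contDiff.comp <|
      contDiff_const.mul <| Real.contDiff_cos.sub contDiff_const,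
    fun k t ↦ by simp only [Real.cos_add_two_pi],
    fun k t ↦ ⟨Real.smoothTransition.nonneg _, Real.smoothTransition.le_one _⟩, fun t ↦ ?_⟩
  · rw [measureReal_restrict_apply hA, setOf_cos_lt_cos_inter_Ioc hα,
      Real.volume_real_Ioo_of_le (by linarith [hα.1])]
    ring
  · convert tendsto_smoothTransition_natCast_mul (Real.cos t - Real.cos (Real.pi * θ)) using 2
    simp [indicator_apply]

theorem intervalIntegral_neg_pi_add_two_pi (f : ℝ → ℝ) :
    ∫ t in -Real.pi..-Real.pi + 2 * Real.pi, f t = ∫ t in Ioc (-Real.pi) Real.pi, f t := by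
  rw [neg_add_eq_sub, two_mul, add_sub_cancel_right,
    intervalIntegral.integral_of_le (by linarith [Real.pi_pos])]

theorem exists_seq_periodic_integral_eq_zero_tendsto_indicator_sub {θ : ℝ} (hθ : θ ∈ Icc 0 1) :
    ∃ A : Set ℝ, MeasurableSet A ∧
      (volume.restrict (Ioc (-Real.pi) Real.pi)).real A = 2 * Real.pi * θ ∧
      ∃ p : ℕ → ℝ → ℝ, (∀ k, ContDiff ℝ ∞ (p k)) ∧ (∀ k, Function.Periodic (p k) (2 * Real.pi)) ∧
        (∀ k, ∫ t in -Real.pi..-Real.pi + 2 * Real.pi, p k t = 0) ∧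
        (∀ k t, p k t ∈ Icc (-1) 1) ∧ ∀ t, Tendsto (p · t) atTop (𝓝 (A.indicator 1 t - θ)) := by
  let I := Ioc (-Real.pi) Real.pi
  obtain ⟨A, hA, hAI, q, hq, hq_per, hq_mem, hq_lim⟩ := exists_seq_periodic_tendsto_indicator hθ
  let m : ℕ → ℝ := fun k ↦ ⨍ t in I, q k t
  have hm_mem (k : ℕ) : m k ∈ Icc 0 1 :=
    (convex_Icc 0 1).set_average_mem isClosed_Icc (by simp [I, Real.pi_pos]) (by simp [I])
      (.of_forall (hq_mem k)) (hq k).continuous.integrableOn_Ioc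
  have hm_lim : Tendsto m atTop (𝓝 θ) := by
    have hlim := tendsto_integral_comp_of_isCompact (μ := volume.restrict I) isCompact_Icc
      continuous_id (fun k ↦ (hq k).continuous.aestronglyMeasurable) hq_mem (.of_forall hq_lim)
    convert hlim.const_mul (2 * Real.pi)⁻¹ using 2
    · simp [m, setAverage_eq, I, Real.pi_nonneg, two_mul]
    · simp only [id_eq]
      rw [integral_indicator_one hA, hAI, inv_mul_cancel_left₀ Real.two_pi_pos.ne']
  refine ⟨A, hA, hAI, fun k t ↦ q k t - m k, fun k ↦ (hq k).sub contDiff_const,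
    fun k t ↦ by simp only [hq_per k t], fun k ↦ ?_, fun k t ↦ ?_, fun t ↦ (hq_lim t).sub hm_lim⟩
  · exact (intervalIntegral_neg_pi_add_two_pi _).trans (integral_sub_average _ _)
  · constructor <;> linarith [(hq_mem k t).1, (hq_mem k t).2, (hm_mem k).1, (hm_mem k).2]

theorem fderiv_mul_inv_mul_comp {E : Type*} [NormedAddCommGroup E] [NormedSpace ℝ E] {φ : E → ℝ}
    {x : E} (hφ : DifferentiableAt ℝ φ x) {p s : ℝ → ℝ} (hs : ∀ r, HasDerivAt s (p r) r)
    (ℓ : E →L[ℝ] ℝ) {N : ℝ} (hN : N ≠ 0) (t : ℝ) :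
    fderiv ℝ (fun y ↦ φ y * (N⁻¹ * s (N * ℓ y + t))) x =
      (φ x * p (N * ℓ x + t)) • ℓ + s (N * ℓ x + t) • N⁻¹ • fderiv ℝ φ x := by
  have hsx := (hs (N * ℓ x + t)).comp_hasFDerivAt x ((ℓ.hasFDerivAt.const_mul N).add_const t)
  refine (hφ.hasFDerivAt.mul (hsx.const_mul N⁻¹)).fderiv.trans ?_
  ext y
  simp only [Function.comp_apply, add_apply, smul_apply, smul_eq_mul]
  field_simp

section TestFunctions

variable {E : Type*} [NormedAddCommGroup E] [NormedSpace ℝ E] [FiniteDimensional ℝ E] {Ω : Opens E}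

theorem exists_testFunction_eq_one {K : Set E} (hK : IsCompact K) (hKΩ : K ⊆ Ω) :
    ∃ φ : 𝓓(Ω, ℝ), (∀ x, φ x ∈ Icc 0 1) ∧ ∀ x ∈ K, φ x = 1 := by
  obtain ⟨K', hK', hKK', hK'Ω⟩ := exists_compact_between hK Ω.isOpen hKΩ
  obtain ⟨f, hf_one, hf_zero, hf⟩ :=
    exists_contMDiffMap_one_nhds_of_subset_interior (n := (⊤ : ℕ∞)) 𝓘(ℝ, E) hK.isClosed hKK'
  have hsupp : tsupport f ⊆ K' := closure_minimal
    (fun x hx ↦ not_imp_comm.1 (hf_zero x) hx) hK'.isClosed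
  exact ⟨⟨f, f.contMDiff.contDiff, .intro hK' hf_zero, hsupp.trans hK'Ω⟩, hf,
    fun x hx ↦ (eventually_nhdsSet_iff_forall.1 hf_one x hx).self_of_nhds⟩

theorem exists_seq_testFunction_tendsto_one (Ω : Opens E) :
    ∃ φ : ℕ → 𝓓(Ω, ℝ), (∀ k x, φ k x ∈ Icc 0 1) ∧ ∀ x ∈ Ω, Tendsto (φ · x) atTop (𝓝 1) := by
  obtain ⟨A, hA_closed, hAΩ, hA_union, hA_mono⟩ := Ω.isOpen.exists_iUnion_isClosed
  choose φ hφ hφ_one using fun k : ℕ ↦ exists_testFunction_eq_one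
    ((isCompact_closedBall (0 : E) k).inter_left (hA_closed k)) (inter_subset_left.trans (hAΩ k))
  refine ⟨φ, hφ, fun x hx ↦ tendsto_const_nhds.congr' ?_⟩
  obtain ⟨i, hi⟩ := mem_iUnion.1 (hA_union.ge hx)
  filter_upwards [eventually_ge_atTop i, eventually_ge_atTop ⌈‖x‖⌉₊] with k hik hxk
  exact (hφ_one k x ⟨hA_mono hik hi, by simpa using Nat.ceil_le.1 hxk⟩).symm

variable [MeasurableSpace E] [BorelSpace E] {μ : Measure E} {w : (E →L[ℝ] ℝ) → ℝ} {c : ℝ}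

theorem mul_le_integral_cutoff_oscillation (hμ : μ Ω ≠ ⊤) (hw : Continuous w)
    (hc : ∀ ψ : 𝓓(Ω, ℝ), c ≤ ∫ x in Ω, w (fderiv ℝ ψ x) ∂μ) (ℓ : E →L[ℝ] ℝ)
    {p s : ℝ → ℝ} (hp : Continuous p) (hs : ContDiff ℝ ∞ s) (hsp : ∀ x, HasDerivAt s (p x) x)
    {T : ℝ} (hT : 0 < T) (hpT : Function.Periodic p T) (hsT : Function.Periodic s T) (a : ℝ)
    (φ : 𝓓(Ω, ℝ)) {N : ℝ} (hN : N ≠ 0) :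
    T * c ≤ ∫ x in Ω, (∫ t in a..a + T, w ((φ x * p t) • ℓ + s t • N⁻¹ • fderiv ℝ φ x)) ∂μ := by
  have : IsFiniteMeasure (μ.restrict Ω) := isFiniteMeasure_restrict.2 hμ
  have hDφ : Continuous (fderiv ℝ φ) := φ.contDiff.continuous_fderiv (by simp)
  set h : E → ℝ → ℝ := fun x t ↦ w ((φ x * p t) • ℓ + s t • N⁻¹ • fderiv ℝ φ x) with hh
  have hcont : Continuous (Function.uncurry h) := by
    have := φ.continuous
    have := hs.continuous
    simp only [hh, Function.uncurry_def]
    fun_prop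
  obtain ⟨C, hC⟩ : ∃ C, ∀ x t, ‖h x t‖ ≤ C := by
    have hg : Continuous fun z : ℝ × ℝ × ℝ × (E →L[ℝ] ℝ) ↦
        w ((z.1 * z.2.1) • ℓ + z.2.2.1 • N⁻¹ • z.2.2.2) := by fun_prop
    have hS := (φ.hasCompactSupport.isCompact_range φ.continuous).prod <|
      (hpT.compact_of_continuous hT.ne' hp).prod <|
      (hsT.compact_of_continuous hT.ne' hs.continuous).prod <|
      (φ.hasCompactSupport.fderiv ℝ).isCompact_range hDφ
    obtain ⟨C, hC⟩ := hS.exists_bound_of_continuousOn hg.continuousOn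
    exact ⟨C, fun x t ↦ hC (φ x, p t, s t, fderiv ℝ φ x) ⟨⟨x, rfl⟩, ⟨t, rfl⟩, ⟨t, rfl⟩, ⟨x, rfl⟩⟩⟩
  refine mul_le_integral_intervalIntegral_of_forall_phase_le (c := fun x ↦ N * ℓ x) hcont hC
    (fun x t ↦ by simp only [hh, hpT t, hsT t]) hT.le (by fun_prop) (fun t ↦ ?_) a
  let ψ : 𝓓(Ω, ℝ) := ⟨fun x ↦ φ x * (N⁻¹ * s (N * ℓ x + t)),
    φ.contDiff.mul (contDiff_const.mul (hs.comp (by fun_prop))), φ.hasCompactSupport.mul_right,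
    tsupport_mul_subset_left.trans φ.tsupport_subset⟩
  have hψ (x : E) : fderiv ℝ ψ x =
      (φ x * p (N * ℓ x + t)) • ℓ + s (N * ℓ x + t) • N⁻¹ • fderiv ℝ φ x :=
    fderiv_mul_inv_mul_comp (φ.contDiff.differentiable (by simp) x) hsp ℓ hN t
  simpa only [hψ] using hc ψ

theorem mul_le_integral_cutoff_profile (hμ : μ Ω ≠ ⊤) (hw : Continuous w)
    (hc : ∀ ψ : 𝓓(Ω, ℝ), c ≤ ∫ x in Ω, w (fderiv ℝ ψ x) ∂μ) (ℓ : E →L[ℝ] ℝ)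
    {p : ℝ → ℝ} (hp : ContDiff ℝ ∞ p) {T : ℝ} (hT : 0 < T) (hpT : Function.Periodic p T) {a : ℝ}
    (hmean : ∫ t in a..a + T, p t = 0) (φ : 𝓓(Ω, ℝ)) :
    T * c ≤ ∫ x in Ω, (∫ t in a..a + T, w ((φ x * p t) • ℓ)) ∂μ := by
  have : IsFiniteMeasure (μ.restrict Ω) := isFiniteMeasure_restrict.2 hμ
  obtain ⟨s, hs, hsp, hsT⟩ := exists_periodic_primitive hp hpT hmean
  have hDφ : Continuous (fderiv ℝ φ) := φ.contDiff.continuous_fderiv (by simp)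
  let g : ℝ × ℝ × (E →L[ℝ] ℝ) → ℝ := fun z ↦
    ∫ t in a..a + T, w ((z.1 * p t) • ℓ + s t • z.2.1 • z.2.2)
  have hg : Continuous g := by
    have := hp.continuous
    have := hs.continuous
    refine intervalIntegral.continuous_parametric_intervalIntegral_of_continuous' ?_ _ _
    simp only [Function.uncurry_def]
    fun_prop
  let u : ℕ → E → ℝ × ℝ × (E →L[ℝ] ℝ) := fun k x ↦ (φ x, ((k : ℝ) + 1)⁻¹, fderiv ℝ φ x)
  have hN : Tendsto (fun k : ℕ ↦ ((k : ℝ) + 1)⁻¹) atTop (𝓝 0) := by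
    simpa using tendsto_one_div_add_atTop_nhds_zero_nat (𝕜 := ℝ)
  have hlim : Tendsto (fun k ↦ ∫ x in Ω, g (u k x) ∂μ) atTop
      (𝓝 (∫ x in Ω, g (φ x, 0, fderiv ℝ φ x) ∂μ)) := by
    have hS := (φ.hasCompactSupport.isCompact_range φ.continuous).prod <|
      (isCompact_Icc (a := (0 : ℝ)) (b := 1)).prod <|
      (φ.hasCompactSupport.fderiv ℝ).isCompact_range hDφ
    refine tendsto_integral_comp_of_isCompact hS hg
      (fun k ↦ (hg.comp (by have := φ.continuous; fun_prop)).aestronglyMeasurable)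
      (fun k x ↦ ⟨⟨x, rfl⟩, ⟨by positivity, inv_le_one_of_one_le₀ (by simp)⟩, ⟨x, rfl⟩⟩)
      (.of_forall fun x ↦ tendsto_const_nhds.prodMk_nhds (hN.prodMk_nhds tendsto_const_nhds))
  have hbound := ge_of_tendsto' hlim fun k ↦
    mul_le_integral_cutoff_oscillation hμ hw hc ℓ hp.continuous hs hsp hT hpT hsT a φ
      k.cast_add_one_ne_zero
  simpa only [g, zero_smul, smul_zero, add_zero] using hbound

theorem mul_le_measure_mul_integral_profile (hμ : μ Ω ≠ ⊤) (hw : Continuous w)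
    (hc : ∀ ψ : 𝓓(Ω, ℝ), c ≤ ∫ x in Ω, w (fderiv ℝ ψ x) ∂μ) (ℓ : E →L[ℝ] ℝ)
    {p : ℝ → ℝ} (hp : ContDiff ℝ ∞ p) {T : ℝ} (hT : 0 < T) (hpT : Function.Periodic p T) {a : ℝ}
    (hmean : ∫ t in a..a + T, p t = 0) :
    T * c ≤ μ.real Ω * ∫ t in a..a + T, w (p t • ℓ) := by
  have : IsFiniteMeasure (μ.restrict Ω) := isFiniteMeasure_restrict.2 hμ
  obtain ⟨φ, hφ, hφ_one⟩ := exists_seq_testFunction_tendsto_one Ω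
  let g : ℝ → ℝ := fun r ↦ ∫ t in a..a + T, w ((r * p t) • ℓ)
  have hg : Continuous g := by
    have := hp.continuous
    refine intervalIntegral.continuous_parametric_intervalIntegral_of_continuous' ?_ _ _
    simp only [Function.uncurry_def]
    fun_prop
  have hlim := tendsto_integral_comp_of_isCompact (μ := μ.restrict Ω) isCompact_Icc hg
    (fun k ↦ (hg.comp (φ k).continuous).aestronglyMeasurable) hφ
    ((ae_restrict_mem Ω.isOpen.measurableSet).mono hφ_one)
  simpa [g] using
    ge_of_tendsto' hlim fun k ↦ mul_le_integral_cutoff_profile hμ hw hc ℓ hp hT hpT hmean (φ k)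

theorem le_measure_mul_simple_laminate (hμ : μ Ω ≠ ⊤) (hw : Continuous w)
    (hc : ∀ ψ : 𝓓(Ω, ℝ), c ≤ ∫ x in Ω, w (fderiv ℝ ψ x) ∂μ) (ℓ : E →L[ℝ] ℝ)
    {θ : ℝ} (hθ : θ ∈ Icc 0 1) :
    c ≤ μ.real Ω * (θ * w ((1 - θ) • ℓ) + (1 - θ) * w (-θ • ℓ)) := by
  let I := Ioc (-Real.pi) Real.pi
  obtain ⟨A, hA, hAI, p, hp, hp_per, hp_mean, hp_mem, hp_lim⟩ :=
    exists_seq_periodic_integral_eq_zero_tendsto_indicator_sub hθ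
  have hbound (k : ℕ) : 2 * Real.pi * c ≤ μ.real Ω * ∫ t in I, w (p k t • ℓ) := by
    rw [← intervalIntegral_neg_pi_add_two_pi]
    exact mul_le_measure_mul_integral_profile hμ hw hc ℓ (hp k) Real.two_pi_pos (hp_per k)
      (hp_mean k)
  have hlim : Tendsto (fun k ↦ ∫ t in I, w (p k t • ℓ)) atTop
      (𝓝 (∫ t in I, w ((A.indicator 1 t - θ) • ℓ))) := by
    have hg : Continuous fun r : ℝ ↦ w (r • ℓ) := by fun_prop
    exact tendsto_integral_comp_of_isCompact isCompact_Icc hg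
      (fun k ↦ (hg.comp (hp k).continuous).aestronglyMeasurable) hp_mem (.of_forall hp_lim)
  have hAcI : (volume.restrict I).real Aᶜ = 2 * Real.pi * (1 - θ) := by
    rw [measureReal_compl hA, hAI, measureReal_restrict_apply_univ]
    rw [Real.volume_real_Ioc_of_le (by linarith [Real.pi_pos])]
    ring
  have h := ge_of_tendsto' (hlim.const_mul (μ.real Ω)) hbound
  rw [integral_comp_indicator_one hA fun r ↦ w ((r - θ) • ℓ), hAI, hAcI, zero_sub] at h
  exact le_of_mul_le_mul_left (by linear_combination h) Real.two_pi_pos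

end TestFunctions

section Energies

variable {V : Type*} [NormedAddCommGroup V]

/-- The squared distance of `X` to the wells `{a₀, a₁}`. -/
def twoWellEnergy (a₀ a₁ X : V) : ℝ := min (‖X - a₀‖ ^ 2) (‖X - a₁‖ ^ 2)

theorem continuous_twoWellEnergy (a₀ a₁ : V) : Continuous (twoWellEnergy a₀ a₁) := by
  unfold twoWellEnergy
  fun_prop

/-- The energy of mixing the wells `a₀` and `a₁` in proportions `1 - θ` and `θ` at macroscopic
value `F`, where `G` is the part of `‖a₁ - a₀‖ ^ 2` that oscillating gradients can recover. -/
def relaxedEnergy [NormedSpace ℝ V] (F a₀ a₁ : V) (G θ : ℝ) : ℝ :=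
  ‖F - ((1 - θ) • a₀ + θ • a₁)‖ ^ 2 + θ * (1 - θ) * (‖a₁ - a₀‖ ^ 2 - G)

theorem continuous_relaxedEnergy [NormedSpace ℝ V] (F a₀ a₁ : V) (G : ℝ) :
    Continuous (relaxedEnergy F a₀ a₁ G) := by
  unfold relaxedEnergy
  fun_prop

theorem exists_isLeast_relaxedEnergy [NormedSpace ℝ V] (F a₀ a₁ : V) (G : ℝ) :
    ∃ M, IsLeast {r | ∃ θ ∈ Icc (0 : ℝ) 1, r = relaxedEnergy F a₀ a₁ G θ} M := by
  obtain ⟨θ, hθ, hmin⟩ := isCompact_Icc.exists_isMinOn (nonempty_Icc.2 zero_le_one)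
    (continuous_relaxedEnergy F a₀ a₁ G).continuousOn
  exact ⟨_, ⟨θ, hθ, rfl⟩, by rintro _ ⟨θ', hθ', rfl⟩; exact hmin hθ'⟩

theorem twoWellEnergy_eq_norm_sub_sq [NormedSpace ℝ V] (a₀ a₁ X : V) {χ : ℝ}
    (hχ : χ = {X | ‖X - a₁‖ < ‖X - a₀‖}.indicator 1 X) :
    twoWellEnergy a₀ a₁ X = ‖X - ((1 - χ) • a₀ + χ • a₁)‖ ^ 2 := by
  by_cases hX : ‖X - a₁‖ < ‖X - a₀‖
  · have hle : ‖X - a₁‖ ^ 2 ≤ ‖X - a₀‖ ^ 2 := by gcongr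
    simp [twoWellEnergy, min_eq_right hle, hχ, hX]
  · have hle : ‖X - a₀‖ ^ 2 ≤ ‖X - a₁‖ ^ 2 := by
      gcongr
      exact not_lt.1 hX
    simp [twoWellEnergy, min_eq_left hle, hχ, hX]

variable [InnerProductSpace ℝ V]

theorem weighted_norm_sq_add_eq (f c : V) (θ : ℝ) :
    θ * ‖f - (1 - θ) • c‖ ^ 2 + (1 - θ) * ‖f + θ • c‖ ^ 2 =
      ‖f‖ ^ 2 + θ * (1 - θ) * ‖c‖ ^ 2 := by
  simp only [norm_sub_sq_real, norm_add_sq_real, real_inner_smul_right, norm_smul, mul_pow,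
    Real.norm_eq_abs, sq_abs]
  ring

theorem twoWellEnergy_laminate_le (F a₀ a₁ B : V) {θ : ℝ} (hθ : θ ∈ Icc 0 1) :
    θ * twoWellEnergy a₀ a₁ (F + (1 - θ) • B) + (1 - θ) * twoWellEnergy a₀ a₁ (F + -θ • B) ≤
      ‖F - ((1 - θ) • a₀ + θ • a₁)‖ ^ 2 + θ * (1 - θ) * ‖a₁ - a₀ - B‖ ^ 2 := by
  rw [← weighted_norm_sq_add_eq]
  gcongr
  · exact hθ.1
  · refine (min_le_right _ _).trans_eq ?_
    congr 2
    module
  · linarith [hθ.2]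
  · refine (min_le_left _ _).trans_eq ?_
    congr 2
    module

theorem le_norm_add_sub_smul_sq (f : V) {a g : V} {G Q : ℝ} (hG : 0 < G)
    (hQ : ⟪a, g⟫_ℝ ^ 2 + Q ≤ G * ‖g‖ ^ 2) (ρ : ℝ) :
    ‖f‖ ^ 2 + ρ ^ 2 * (‖a‖ ^ 2 - G) - 2 * ρ * ⟪f, a⟫_ℝ + (2 * ⟪f, g⟫_ℝ + G⁻¹ * Q) ≤
      ‖f + g - ρ • a‖ ^ 2 := by
  have hexpand : ‖f + g - ρ • a‖ ^ 2 = ‖f‖ ^ 2 + 2 * ⟪f, g⟫_ℝ + ‖g‖ ^ 2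
      - 2 * ρ * (⟪f, a⟫_ℝ + ⟪a, g⟫_ℝ) + ρ ^ 2 * ‖a‖ ^ 2 := by
    rw [norm_sub_sq_real, norm_add_sq_real, inner_smul_right, inner_add_left, norm_smul, mul_pow,
      Real.norm_eq_abs, sq_abs, real_inner_comm g a]
    ring
  have hg : G⁻¹ * (⟪a, g⟫_ℝ ^ 2 + Q) ≤ ‖g‖ ^ 2 := (inv_mul_le_iff₀ hG).2 hQ
  have hsquare : G⁻¹ * (⟪a, g⟫_ℝ - ρ * G) ^ 2 =
      G⁻¹ * ⟪a, g⟫_ℝ ^ 2 - 2 * ρ * ⟪a, g⟫_ℝ + ρ ^ 2 * G := by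
    field_simp
    ring
  have : 0 ≤ G⁻¹ * (⟪a, g⟫_ℝ - ρ * G) ^ 2 := by positivity
  linarith

theorem relaxedEnergy_add_le_norm_sub_sq (F : V) {a₀ a₁ g : V} {G Q : ℝ} (hG : 0 < G)
    (hQ : ⟪a₁ - a₀, g⟫_ℝ ^ 2 + Q ≤ G * ‖g‖ ^ 2) {χ : ℝ} (hχ : χ ^ 2 = χ) (θ : ℝ) :
    relaxedEnergy F a₀ a₁ G θ
      + (χ - θ) * ((1 - 2 * θ) * (‖a₁ - a₀‖ ^ 2 - G)
        - 2 * ⟪F - ((1 - θ) • a₀ + θ • a₁), a₁ - a₀⟫_ℝ)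
      + (2 * ⟪F - ((1 - θ) • a₀ + θ • a₁), g⟫_ℝ + G⁻¹ * Q) ≤
      ‖F + g - ((1 - χ) • a₀ + χ • a₁)‖ ^ 2 := by
  convert le_norm_add_sub_smul_sq (F - ((1 - θ) • a₀ + θ • a₁)) hG hQ (χ - θ) using 1
  · rw [relaxedEnergy]
    linear_combination -(‖a₁ - a₀‖ ^ 2 - G) * hχ
  · congr 2
    module

end Energies

section Frobenius

variable {l m n : Type*} [Fintype l] [Fintype m] [Fintype n]

theorem frobenius_norm_sq (A : Matrix m n ℝ) : ‖A‖ ^ 2 = ∑ i, ∑ j, A i j ^ 2 := by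
  rw [Matrix.frobenius_norm_def, ← Real.sqrt_eq_rpow, Real.sq_sqrt (by positivity)]
  simp

theorem trace_transpose_mul_eq_sum {R : Type*} [NonUnitalNonAssocSemiring R] (A B : Matrix m n R) :
    (Aᵀ * B).trace = ∑ i, ∑ j, A i j * B i j := by
  simp_rw [Matrix.trace, Matrix.diag_apply, Matrix.mul_apply, Matrix.transpose_apply]
  exact Finset.sum_comm

/-- The Frobenius inner product `⟪A, B⟫ = tr (Aᵀ B)`, inducing the scoped Frobenius norm. -/
noncomputable instance frobeniusInnerProductSpace : InnerProductSpace ℝ (Matrix m n ℝ) where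
  inner A B := (Aᵀ * B).trace
  norm_sq_eq_re_inner A := by rw [frobenius_norm_sq]; simp [trace_transpose_mul_eq_sum, sq]
  conj_inner_symm A B := by simp [trace_transpose_mul_eq_sum, mul_comm]
  add_left A B C := by simp [Matrix.add_mul]
  smul_left A B r := by simp

theorem frobenius_inner_eq_trace (A B : Matrix m n ℝ) : ⟪A, B⟫_ℝ = (Aᵀ * B).trace := rfl

theorem trace_mul_self_le_norm_sq (N : Matrix m m ℝ) : (N * N).trace ≤ ‖N‖ ^ 2 := by
  simpa [frobenius_inner_eq_trace, Matrix.frobenius_norm_transpose, sq] using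
    real_inner_le_norm Nᵀ N

theorem norm_sq_mul_transpose_le {a : Matrix m n ℝ} {G : ℝ}
    (hG : ∀ ξ : n → ℝ, ∑ i, (a *ᵥ ξ) i ^ 2 ≤ G * ∑ j, ξ j ^ 2) (g : Matrix l n ℝ) :
    ‖g * aᵀ‖ ^ 2 ≤ G * ‖g‖ ^ 2 := by
  rw [frobenius_norm_sq, frobenius_norm_sq, Finset.mul_sum]
  refine Finset.sum_le_sum fun i _ ↦ (hG (g i)).trans_eq' ?_
  simp [Matrix.mul_apply, Matrix.mulVec, dotProduct, mul_comm]

theorem norm_sub_vecMulVec_mulVec_sq (a : Matrix m n ℝ) {ξ : n → ℝ} (hξ : ∑ j, ξ j ^ 2 = 1) :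
    ‖a - Matrix.vecMulVec (a *ᵥ ξ) ξ‖ ^ 2 = ‖a‖ ^ 2 - ∑ i, (a *ᵥ ξ) i ^ 2 := by
  have hinner : ⟪a, Matrix.vecMulVec (a *ᵥ ξ) ξ⟫_ℝ = ∑ i, (a *ᵥ ξ) i ^ 2 := by
    rw [frobenius_inner_eq_trace, trace_transpose_mul_eq_sum]
    simp only [Matrix.vecMulVec_apply, sq, Matrix.mulVec, dotProduct]
    refine Finset.sum_congr rfl fun i _ ↦ ?_
    rw [Finset.sum_mul]
    exact Finset.sum_congr rfl fun j _ ↦ by ring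
  have hnorm : ‖Matrix.vecMulVec (a *ᵥ ξ) ξ‖ ^ 2 = ∑ i, (a *ᵥ ξ) i ^ 2 := by
    simp [frobenius_norm_sq, Matrix.vecMulVec_apply, mul_pow, ← Finset.mul_sum, hξ]
  rw [norm_sub_sq_real, hinner, hnorm]
  ring

/-- The quadratic form `tr (P ^ 2) - (tr P) ^ 2` of `P = g aᵀ`, whose integral over gradients of
test functions vanishes. -/
def nullLagrangian (a g : Matrix m n ℝ) : ℝ :=
  ((g * aᵀ) * (g * aᵀ)).trace - (g * aᵀ).trace ^ 2

theorem continuous_nullLagrangian (a : Matrix m n ℝ) : Continuous (nullLagrangian a) := by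
  unfold nullLagrangian
  fun_prop

theorem inner_sq_add_nullLagrangian_le {a : Matrix m n ℝ} {G : ℝ}
    (hG : ∀ ξ : n → ℝ, ∑ i, (a *ᵥ ξ) i ^ 2 ≤ G * ∑ j, ξ j ^ 2) (g : Matrix m n ℝ) :
    ⟪a, g⟫_ℝ ^ 2 + nullLagrangian a g ≤ G * ‖g‖ ^ 2 := by
  rw [frobenius_inner_eq_trace, Matrix.trace_mul_comm, nullLagrangian, add_sub_cancel]
  exact (trace_mul_self_le_norm_sq _).trans (norm_sq_mul_transpose_le hG g)

end Frobenius

section Calculus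

theorem integral_fderiv_mul_fderiv_comm {E : Type*} [NormedAddCommGroup E] [NormedSpace ℝ E]
    [FiniteDimensional ℝ E] [MeasurableSpace E] [BorelSpace E] {μ : Measure E} [μ.IsAddHaarMeasure]
    {f g : E → ℝ} (hf : ContDiff ℝ 1 f) (hf_supp : HasCompactSupport f) (hg : ContDiff ℝ 2 g)
    (u w : E) :
    ∫ x, fderiv ℝ f x u * fderiv ℝ g x w ∂μ = ∫ x, fderiv ℝ f x w * fderiv ℝ g x u ∂μ := by
  have hDg (y : E) : ContDiff ℝ 1 fun x ↦ fderiv ℝ g x y :=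
    hg.fderiv_right (m := 1) le_rfl |>.clm_apply contDiff_const
  have hparts (y z : E) : ∫ x, fderiv ℝ f x y * fderiv ℝ g x z ∂μ =
      -∫ x, f x * fderiv ℝ (fun x ↦ fderiv ℝ g x z) x y ∂μ := by
    have hf' : Continuous fun x ↦ fderiv ℝ f x y :=
      (hf.continuous_fderiv one_ne_zero).clm_apply continuous_const
    have hg' : Continuous fun x ↦ fderiv ℝ (fun x ↦ fderiv ℝ g x z) x y :=
      ((hDg z).continuous_fderiv one_ne_zero).clm_apply continuous_const
    rw [← neg_eq_iff_eq_neg, eq_comm]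
    refine integral_mul_fderiv_eq_neg_fderiv_mul_of_integrable ?_ ?_ ?_ ?_ ?_
    · exact (hf'.mul (hDg z).continuous).integrable_of_hasCompactSupport
        (hf_supp.fderiv_apply ℝ y).mul_right
    · exact (hf.continuous.mul hg').integrable_of_hasCompactSupport hf_supp.mul_right
    · exact (hf.continuous.mul (hDg z).continuous).integrable_of_hasCompactSupport hf_supp.mul_right
    · exact fun x _ ↦ hf.differentiable one_ne_zero x
    · exact fun x _ ↦ (hDg z).differentiable one_ne_zero x
  have hsymm (x : E) : fderiv ℝ (fun x ↦ fderiv ℝ g x w) x u =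
      fderiv ℝ (fun x ↦ fderiv ℝ g x u) x w := by
    have hD2g : DifferentiableAt ℝ (fderiv ℝ g) x :=
      hg.fderiv_right (m := 1) le_rfl |>.differentiable one_ne_zero x
    rw [fderiv_clm_apply hD2g (differentiableAt_const w),
      fderiv_clm_apply hD2g (differentiableAt_const u)]
    simpa using (hg.contDiffAt.isSymmSndFDerivAt (by simp)).eq u w
  rw [hparts, hparts]
  simp_rw [hsymm]

theorem integral_fderiv_apply_eq_zero {E : Type*} [NormedAddCommGroup E] [NormedSpace ℝ E]
    [FiniteDimensional ℝ E] [MeasurableSpace E] [BorelSpace E] {μ : Measure E} [μ.IsAddHaarMeasure]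
    {f : E → ℝ} (hf : ContDiff ℝ 1 f) (hf_supp : HasCompactSupport f) (u : E) :
    ∫ x, fderiv ℝ f x u ∂μ = 0 := by
  have hf' : Continuous fun x ↦ fderiv ℝ f x u :=
    (hf.continuous_fderiv one_ne_zero).clm_apply continuous_const
  simpa using integral_mul_fderiv_eq_neg_fderiv_mul_of_integrable (μ := μ) (f := fun _ ↦ (1 : ℝ))
    (g := f) (v := u) (by simp)
    (by simpa using hf'.integrable_of_hasCompactSupport (hf_supp.fderiv_apply ℝ u))
    (by simpa using hf.continuous.integrable_of_hasCompactSupport hf_supp)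
    (by simp) (fun x _ ↦ hf.differentiable one_ne_zero x)

end Calculus

section DerivMatrix

variable {m n : Type*} [Fintype n] [DecidableEq n]

/-- The Jacobian matrix of `v` at `x`: its `(i, j)` entry is the `j`-th partial derivative of
`v i`. -/
noncomputable def derivMatrix (v : (n → ℝ) → m → ℝ) (x : n → ℝ) : Matrix m n ℝ :=
  LinearMap.toMatrix' (fderiv ℝ v x).toLinearMap

theorem derivMatrix_smul_const [Finite m] {ψ : (n → ℝ) → ℝ} {x : n → ℝ}
    (hψ : DifferentiableAt ℝ ψ x) (b : m → ℝ) :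
    derivMatrix (fun y ↦ ψ y • b) x =
      Matrix.vecMulVec b fun j ↦ fderiv ℝ ψ x (Pi.single j 1) := by
  have := Fintype.ofFinite m
  have hfderiv : fderiv ℝ (fun y ↦ ψ y • b) x = (fderiv ℝ ψ x).smulRight b :=
    (hψ.hasFDerivAt.smul_const b).fderiv
  ext i j
  simp [derivMatrix, hfderiv, LinearMap.toMatrix'_apply, Matrix.vecMulVec_apply, mul_comm]

variable [Fintype m] {Ω : Opens (n → ℝ)} (v : 𝓓(Ω, m → ℝ))

theorem continuous_derivMatrix : Continuous (derivMatrix v) :=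
  continuous_matrix fun i j ↦ (continuous_apply i).comp <|
    (v.contDiff.continuous_fderiv (by simp)).clm_apply continuous_const

variable {q : Matrix m n ℝ → ℝ}

theorem hasCompactSupport_comp_derivMatrix (hq : q 0 = 0) :
    HasCompactSupport fun x ↦ q (derivMatrix v x) :=
  (v.hasCompactSupport.fderiv ℝ).comp_left
    (g := fun L : (n → ℝ) →L[ℝ] m → ℝ ↦ q (LinearMap.toMatrix' L.toLinearMap)) (by simpa using hq)

theorem integrable_comp_derivMatrix (hq : Continuous q) (hq0 : q 0 = 0) :
    Integrable fun x ↦ q (derivMatrix v x) :=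
  (hq.comp (continuous_derivMatrix v)).integrable_of_hasCompactSupport
    (hasCompactSupport_comp_derivMatrix v hq0)

theorem setIntegral_comp_derivMatrix (hq0 : q 0 = 0) :
    ∫ x in Ω, q (derivMatrix v x) = ∫ x, q (derivMatrix v x) := by
  refine setIntegral_eq_integral_of_forall_compl_eq_zero fun x hx ↦ ?_
  have hDv : fderiv ℝ v x = 0 :=
    fderiv_of_notMem_tsupport ℝ fun h ↦ hx (v.tsupport_subset h)
  simp [derivMatrix, hDv, hq0]

theorem derivMatrix_mul_transpose_apply (a : Matrix m n ℝ) (x : n → ℝ) (i k : m) :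
    (derivMatrix v x * aᵀ) i k = fderiv ℝ (fun y ↦ v y i) x (a.row k) := by
  have hv : DifferentiableAt ℝ v x := v.contDiff.differentiable (by simp) x
  rw [fderiv_apply hv]
  change (derivMatrix v x *ᵥ a.row k) i = _
  rw [derivMatrix, LinearMap.toMatrix'_mulVec]
  rfl

theorem integral_inner_derivMatrix (f : Matrix m n ℝ) : ∫ x, ⟪f, derivMatrix v x⟫_ℝ = 0 := by
  let u (i : m) : 𝓓(Ω, ℝ) :=
    TestFunction.postcompCLM (ContinuousLinearMap.proj (R := ℝ) (φ := fun _ : m ↦ ℝ) i) v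
  have hu (i : m) : ContDiff ℝ 1 (u i) := contDiff_infty.1 (u i).contDiff 1
  have htrace (x : n → ℝ) : ⟪f, derivMatrix v x⟫_ℝ = ∑ i, fderiv ℝ (u i) x (f.row i) := by
    rw [frobenius_inner_eq_trace, Matrix.trace_mul_comm]
    exact Finset.sum_congr rfl fun i _ ↦ derivMatrix_mul_transpose_apply v f x i i
  simp_rw [htrace]
  rw [integral_finsetSum]
  · exact Finset.sum_eq_zero fun i _ ↦
      integral_fderiv_apply_eq_zero (hu i) (u i).hasCompactSupport (f.row i)
  · exact fun i _ ↦ (((hu i).continuous_fderiv one_ne_zero).clm_apply continuous_const)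
      |>.integrable_of_hasCompactSupport ((u i).hasCompactSupport.fderiv_apply ℝ _)

theorem integral_nullLagrangian_derivMatrix (a : Matrix m n ℝ) :
    ∫ x, nullLagrangian a (derivMatrix v x) = 0 := by
  let u (i : m) : 𝓓(Ω, ℝ) :=
    TestFunction.postcompCLM (ContinuousLinearMap.proj (R := ℝ) (φ := fun _ : m ↦ ℝ) i) v
  have hu (i : m) : ContDiff ℝ 2 (u i) := contDiff_infty.1 (u i).contDiff 2
  have hDu (i : m) (y : n → ℝ) : Continuous fun x ↦ fderiv ℝ (u i) x y :=
    ((hu i).continuous_fderiv two_ne_zero).clm_apply continuous_const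
  have hint (i k : m) (y z : n → ℝ) :
      Integrable fun x ↦ fderiv ℝ (u i) x y * fderiv ℝ (u k) x z :=
    ((hDu i y).mul (hDu k z)).integrable_of_hasCompactSupport
      ((u i).hasCompactSupport.fderiv_apply ℝ y).mul_right
  let minor (i k : m) (x : n → ℝ) : ℝ :=
    fderiv ℝ (u i) x (a.row k) * fderiv ℝ (u k) x (a.row i) -
      fderiv ℝ (u i) x (a.row i) * fderiv ℝ (u k) x (a.row k)
  have hminor_int (i k : m) : Integrable (minor i k) := (hint _ _ _ _).sub (hint _ _ _ _)
  have hminor_zero (i k : m) : ∫ x, minor i k x = 0 := by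
    rw [integral_sub (hint _ _ _ _) (hint _ _ _ _), sub_eq_zero]
    exact integral_fderiv_mul_fderiv_comm ((hu i).of_le one_le_two) (u i).hasCompactSupport
      (hu k) _ _
  have hsum (x : n → ℝ) : nullLagrangian a (derivMatrix v x) = ∑ i, ∑ k, minor i k x := by
    rw [nullLagrangian, sq, Matrix.trace, Matrix.trace, Finset.sum_mul_sum]
    simp only [minor, Matrix.diag_apply, Finset.sum_sub_distrib,
      Matrix.mul_apply (M := derivMatrix v x * aᵀ), derivMatrix_mul_transpose_apply]
    rfl
  simp_rw [hsum]
  rw [integral_finsetSum _ fun i _ ↦ integrable_finsetSum _ fun k _ ↦ hminor_int i k]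
  refine Finset.sum_eq_zero fun i _ ↦ ?_
  rw [integral_finsetSum _ fun k _ ↦ hminor_int i k]
  exact Finset.sum_eq_zero fun k _ ↦ hminor_zero i k

theorem setIntegral_inner_add_nullLagrangian_derivMatrix (f a : Matrix m n ℝ) (r s : ℝ) :
    ∫ x in Ω, (r * ⟪f, derivMatrix v x⟫_ℝ + s * nullLagrangian a (derivMatrix v x)) = 0 := by
  have hinner := integrable_comp_derivMatrix v (q := fun g ↦ ⟪f, g⟫_ℝ) (by fun_prop) (by simp)
  have hnull := integrable_comp_derivMatrix v (continuous_nullLagrangian a)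
    (by simp [nullLagrangian])
  rw [setIntegral_comp_derivMatrix v (q := fun g ↦ r * ⟪f, g⟫_ℝ + s * nullLagrangian a g)
      (by simp [nullLagrangian]), integral_add (hinner.const_mul r) (hnull.const_mul s),
    integral_const_mul, integral_const_mul, integral_inner_derivMatrix,
    integral_nullLagrangian_derivMatrix]
  simp

end DerivMatrix

section Sphere

variable {m n : Type*} [Fintype m] [Fintype n] {a : Matrix m n ℝ}

theorem sum_mulVec_sq_le_of_forall_sphere {G : ℝ}
    (hG : ∀ ξ : n → ℝ, ∑ j, ξ j ^ 2 = 1 → ∑ i, (a *ᵥ ξ) i ^ 2 ≤ G) (ξ : n → ℝ) :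
    ∑ i, (a *ᵥ ξ) i ^ 2 ≤ G * ∑ j, ξ j ^ 2 := by
  rcases eq_or_ne ξ 0 with rfl | hξ
  · simp
  have hr : 0 < ∑ j, ξ j ^ 2 := by
    simpa [dotProduct, sq] using Matrix.dotProduct_self_star_pos_iff.2 hξ
  have hscaled := hG ((√(∑ j, ξ j ^ 2))⁻¹ • ξ) (by
    simp [mul_pow, ← Finset.mul_sum, Real.sq_sqrt hr.le, hr.ne'])
  simp only [Matrix.mulVec_smul, Pi.smul_apply, smul_eq_mul, mul_pow, ← Finset.mul_sum, inv_pow,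
    Real.sq_sqrt hr.le] at hscaled
  rwa [mul_comm, ← inv_mul_le_iff₀ hr]

theorem isCompact_setOf_sum_sq_eq_one : IsCompact {ξ : n → ℝ | ∑ j, ξ j ^ 2 = 1} := by
  refine isCompact_Icc (a := (-1 : n → ℝ)) (b := 1) |>.of_isClosed_subset
    (isClosed_eq (by fun_prop) continuous_const) fun ξ hξ ↦ ?_
  have hξ_abs (j : n) : |ξ j| ≤ 1 := by
    rw [← sq_le_one_iff_abs_le_one, ← hξ]
    exact Finset.single_le_sum (fun i _ ↦ sq_nonneg (ξ i)) (Finset.mem_univ j)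
  exact ⟨fun j ↦ (abs_le.1 (hξ_abs j)).1, fun j ↦ (abs_le.1 (hξ_abs j)).2⟩

theorem exists_sphere_mulVec_sq_pos (ha : a ≠ 0) :
    ∃ ξ : n → ℝ, ∑ j, ξ j ^ 2 = 1 ∧ 0 < ∑ i, (a *ᵥ ξ) i ^ 2 := by
  classical
  obtain ⟨i, j, hij⟩ : ∃ i j, a i j ≠ 0 := by
    by_contra! h
    exact ha (Matrix.ext h)
  refine ⟨Pi.single j 1, by simp [Pi.single_apply], ?_⟩
  exact Finset.sum_pos' (fun _ _ ↦ sq_nonneg _) ⟨i, Finset.mem_univ i, by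
    simpa using sq_pos_of_ne_zero hij⟩

theorem exists_pos_isGreatest_mulVec_sq_sphere (ha : a ≠ 0) :
    ∃ G, 0 < G ∧ IsGreatest {g | ∃ ξ : n → ℝ, ∑ j, ξ j ^ 2 = 1 ∧ g = ∑ i, (a *ᵥ ξ) i ^ 2} G := by
  obtain ⟨ξ₀, hξ₀, hpos⟩ := exists_sphere_mulVec_sq_pos ha
  obtain ⟨ξ, hξ, hmax⟩ := isCompact_setOf_sum_sq_eq_one.exists_isMaxOn ⟨ξ₀, hξ₀⟩
    (f := fun ξ ↦ ∑ i, (a *ᵥ ξ) i ^ 2) (by fun_prop)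
  exact ⟨_, hpos.trans_le (hmax hξ₀), ⟨ξ, hξ, rfl⟩, by rintro _ ⟨η, hη, rfl⟩; exact hmax hη⟩

end Sphere

section TwoWell

variable {m n : Type*} [Fintype m] [Fintype n] [DecidableEq n] {Ω : Opens (n → ℝ)}
  {F a₀ a₁ : Matrix m n ℝ}

theorem integrableOn_twoWellEnergy_derivMatrix (hΩ : volume (Ω : Set (n → ℝ)) ≠ ⊤)
    (v : 𝓓(Ω, m → ℝ)) : IntegrableOn (fun x ↦ twoWellEnergy a₀ a₁ (F + derivMatrix v x)) Ω := by
  have hq : Continuous fun g ↦ twoWellEnergy a₀ a₁ (F + g) - twoWellEnergy a₀ a₁ F := by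
    have := continuous_twoWellEnergy a₀ a₁
    fun_prop
  refine ((integrable_comp_derivMatrix v hq (by simp)).integrableOn.add
    (integrableOn_const hΩ (C := twoWellEnergy a₀ a₁ F))).congr ?_
  exact .of_forall fun x ↦ sub_add_cancel _ _

theorem volume_mul_le_setIntegral_twoWellEnergy (hΩ : volume (Ω : Set (n → ℝ)) ≠ ⊤) {G M : ℝ}
    (hG_pos : 0 < G) (hG : ∀ ξ : n → ℝ, ∑ i, ((a₁ - a₀) *ᵥ ξ) i ^ 2 ≤ G * ∑ j, ξ j ^ 2)
    (hM : ∀ θ ∈ Icc 0 1, M ≤ relaxedEnergy F a₀ a₁ G θ) (v : 𝓓(Ω, m → ℝ)) :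
    volume.real (Ω : Set (n → ℝ)) * M ≤
      ∫ x in Ω, twoWellEnergy a₀ a₁ (F + derivMatrix v x) := by
  have : IsFiniteMeasure (volume.restrict (Ω : Set (n → ℝ))) := isFiniteMeasure_restrict.2 hΩ
  have hDv := continuous_derivMatrix v
  let B : Set (n → ℝ) := {x | ‖F + derivMatrix v x - a₁‖ < ‖F + derivMatrix v x - a₀‖}
  have hB : MeasurableSet B := (isOpen_lt (by fun_prop) (by fun_prop)).measurableSet
  let χ : (n → ℝ) → ℝ := B.indicator 1
  have hχ_sq (x : n → ℝ) : χ x ^ 2 = χ x := by by_cases hx : x ∈ B <;> simp [χ, hx]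
  let θ : ℝ := ⨍ x in Ω, χ x
  let f := F - ((1 - θ) • a₀ + θ • a₁)
  let K := (1 - 2 * θ) * (‖a₁ - a₀‖ ^ 2 - G) - 2 * ⟪f, a₁ - a₀⟫_ℝ
  let q : Matrix m n ℝ → ℝ := fun g ↦ 2 * ⟪f, g⟫_ℝ + G⁻¹ * nullLagrangian (a₁ - a₀) g
  have hpointwise (x : n → ℝ) : relaxedEnergy F a₀ a₁ G θ + (χ x - θ) * K + q (derivMatrix v x) ≤
      twoWellEnergy a₀ a₁ (F + derivMatrix v x) := by
    rw [twoWellEnergy_eq_norm_sub_sq a₀ a₁ _ (χ := χ x) rfl]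
    exact relaxedEnergy_add_le_norm_sub_sq F hG_pos
      (inner_sq_add_nullLagrangian_le hG (derivMatrix v x)) (hχ_sq x) θ
  have hχ_int : IntegrableOn χ Ω := (integrable_const 1).indicator hB
  have hq_int : IntegrableOn (fun x ↦ q (derivMatrix v x)) Ω := by
    have := continuous_nullLagrangian (a₁ - a₀)
    exact (integrable_comp_derivMatrix v (by fun_prop) (by simp [q, nullLagrangian])).integrableOn
  have hq_mean : ∫ x in Ω, q (derivMatrix v x) = 0 :=
    setIntegral_inner_add_nullLagrangian_derivMatrix v f (a₁ - a₀) 2 G⁻¹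
  calc volume.real (Ω : Set (n → ℝ)) * M
      ≤ volume.real (Ω : Set (n → ℝ)) * relaxedEnergy F a₀ a₁ G θ := by
        gcongr
        exact hM θ (average_indicator_one_mem_Icc hB)
    _ = ∫ x in Ω, (relaxedEnergy F a₀ a₁ G θ + (χ x - θ) * K + q (derivMatrix v x)) := by
        rw [integral_const_add_sub_average_mul_add hχ_int hq_int hq_mean,
          measureReal_restrict_apply_univ]
    _ ≤ ∫ x in Ω, twoWellEnergy a₀ a₁ (F + derivMatrix v x) := by
        refine integral_mono (.add (.add (integrable_const _) ?_) hq_int)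
          (integrableOn_twoWellEnergy_derivMatrix hΩ v) hpointwise
        exact (hχ_int.sub (integrable_const θ)).mul_const K

theorem le_volume_mul_relaxedEnergy (hΩ : volume (Ω : Set (n → ℝ)) ≠ ⊤) {e : ℝ}
    (he : ∀ v : 𝓓(Ω, m → ℝ), e ≤ ∫ x in Ω, twoWellEnergy a₀ a₁ (F + derivMatrix v x))
    {ξ : n → ℝ} (hξ : ∑ j, ξ j ^ 2 = 1) {θ : ℝ} (hθ : θ ∈ Icc 0 1) :
    e ≤ volume.real (Ω : Set (n → ℝ)) *
      relaxedEnergy F a₀ a₁ (∑ i, ((a₁ - a₀) *ᵥ ξ) i ^ 2) θ := by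
  let b : m → ℝ := (a₁ - a₀) *ᵥ ξ
  let w : ((n → ℝ) →L[ℝ] ℝ) → ℝ := fun L ↦
    twoWellEnergy a₀ a₁ (F + Matrix.vecMulVec b fun j ↦ L (Pi.single j 1))
  have hw : Continuous w := by
    have := continuous_twoWellEnergy a₀ a₁
    fun_prop
  have hw_le (ψ : 𝓓(Ω, ℝ)) : e ≤ ∫ x in Ω, w (fderiv ℝ ψ x) := by
    have hψ (x : n → ℝ) : DifferentiableAt ℝ ψ x := ψ.contDiff.differentiable (by simp) x
    simp only [w, ← derivMatrix_smul_const (hψ _) b]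
    exact he (TestFunction.postcompCLM (ContinuousLinearMap.toSpanSingleton ℝ b) ψ)
  let ℓ : (n → ℝ) →L[ℝ] ℝ := ∑ j, ξ j • ContinuousLinearMap.proj j
  have hℓ (r : ℝ) : w (r • ℓ) = twoWellEnergy a₀ a₁ (F + r • Matrix.vecMulVec b ξ) := by
    have hℓ_single (j : n) : (r • ℓ) (Pi.single j 1) = r • ξ j := by simp [ℓ, Pi.single_apply]
    simp only [w, hℓ_single, ← Matrix.vecMulVec_smul]
    rfl
  calc e ≤ volume.real (Ω : Set (n → ℝ)) * (θ * w ((1 - θ) • ℓ) + (1 - θ) * w (-θ • ℓ)) :=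
        le_measure_mul_simple_laminate hΩ hw hw_le ℓ hθ
    _ ≤ _ := by
        gcongr
        rw [hℓ, hℓ, relaxedEnergy, ← norm_sub_vecMulVec_mulVec_sq _ hξ]
        exact twoWellEnergy_laminate_le F a₀ a₁ _ hθ

theorem statement0_general {Ω : Set (n → ℝ)} (hΩ : IsOpen Ω) (hΩ_fin : volume Ω ≠ ⊤)
    (F a₀ a₁ : Matrix m n ℝ) (hwells : a₀ ≠ a₁) :
    ∃ G M : ℝ,
      IsGreatest {g : ℝ | ∃ ξ : n → ℝ, ∑ j, ξ j ^ 2 = 1 ∧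
        g = ∑ i, ((a₁ - a₀) *ᵥ ξ) i ^ 2} G ∧
      IsLeast {r : ℝ | ∃ θ ∈ Icc (0 : ℝ) 1, r = relaxedEnergy F a₀ a₁ G θ} M ∧
      sInf {e : ℝ | ∃ v : (n → ℝ) → m → ℝ,
          ContDiff ℝ (⊤ : ℕ∞) v ∧ HasCompactSupport v ∧ tsupport v ⊆ Ω ∧
          e = ∫ x in Ω, twoWellEnergy a₀ a₁ (F + derivMatrix v x)}
        = (volume Ω).toReal * M := by
  obtain ⟨G, hG_pos, hG⟩ := exists_pos_isGreatest_mulVec_sq_sphere (sub_ne_zero.2 hwells.symm)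
  obtain ⟨M, hM⟩ := exists_isLeast_relaxedEnergy F a₀ a₁ G
  refine ⟨G, M, hG, hM, IsGLB.csInf_eq ⟨?_, fun e he ↦ ?_⟩ ?_⟩
  · rintro _ ⟨v, hv, hv_supp, hvΩ, rfl⟩
    exact volume_mul_le_setIntegral_twoWellEnergy (Ω := ⟨Ω, hΩ⟩) hΩ_fin hG_pos
      (sum_mulVec_sq_le_of_forall_sphere fun ξ hξ ↦ hG.2 ⟨ξ, hξ, rfl⟩)
      (fun θ hθ ↦ hM.2 ⟨θ, hθ, rfl⟩) ⟨v, hv, hv_supp, hvΩ⟩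
  · obtain ⟨⟨ξ, hξ, rfl⟩, -⟩ := hG
    obtain ⟨⟨θ, hθ, rfl⟩, -⟩ := hM
    exact le_volume_mul_relaxedEnergy (Ω := ⟨Ω, hΩ⟩) hΩ_fin
      (fun v ↦ he ⟨v, v.contDiff, v.hasCompactSupport, v.tsupport_subset, rfl⟩) hξ hθ
  · exact ⟨_, 0, contDiff_const, .zero, by simp, rfl⟩

end TwoWell

theorem frob2_eq_norm_sq {d : ℕ} (M : Matrix (Fin d) (Fin d) ℝ) : frob2 M = ‖M‖ ^ 2 :=
  (frobenius_norm_sq M).symm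

/-- Relaxation formula for the two-well energy for the gradient. -/
theorem statement0
    (d : ℕ) (hd : 2 ≤ d)
    (Ω : Set (Fin d → ℝ)) (hΩopen : IsOpen Ω) (hΩne : Ω.Nonempty)
    (hΩbdd : Bornology.IsBounded Ω)
    (F a₀ a₁ : Matrix (Fin d) (Fin d) ℝ) (hwells : a₀ ≠ a₁) :
    ∃ G M : ℝ,
      -- `G = max_{ξ ∈ S^{d-1}} ‖aξ‖²`, and the maximum is attained
      IsGreatest {g : ℝ | ∃ ξ : Fin d → ℝ, (∑ i, ξ i ^ 2) = 1 ∧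
        g = ∑ i, ((a₁ - a₀).mulVec ξ i) ^ 2} G ∧
      -- `M = min_{θ ∈ [0,1]} (‖F - a_θ‖² + θ(1-θ)(‖a‖² - G))`, attained
      IsLeast {m : ℝ | ∃ θ ∈ Set.Icc (0 : ℝ) 1,
        m = frob2 (F - ((1 - θ) • a₀ + θ • a₁)) +
          θ * (1 - θ) * (frob2 (a₁ - a₀) - G)} M ∧
      -- the infimum of the elastic energy over test fields equals `|Ω| * M`
      sInf {e : ℝ | ∃ v : (Fin d → ℝ) → (Fin d → ℝ),
          ContDiff ℝ (⊤ : ℕ∞) v ∧ HasCompactSupport v ∧ tsupport v ⊆ Ω ∧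
          e = ∫ x in Ω,
            min (frob2 (F + jacobian v x - a₀)) (frob2 (F + jacobian v x - a₁))}
        = (volume Ω).toReal * M := by
  simp only [frob2_eq_norm_sq]
  exact statement0_general hΩopen hΩbdd.measure_lt_top.ne F a₀ a₁ hwells
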